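/- Let R ∈ ℂ(z)^{m×m} and define G ∈ ℂ(z)^{m×m} entrywise by G_{ij} := the substitution of (I − z)/(I + z) into R_{ij}, where I is the imaginary unit Complex.I. Then R is para-Hermitian if and only if G is Hermitian, i.e. G^* = G (the coefficientwise-conjugate transpose of G equals G). -/

import Mathlib

open Polynomial Matrix

set_option synthInstance.maxHeartbeats 1000000
set_option maxHeartbeats 1000000

noncomputable section

/-- Coefficientwise complex conjugation on rational functions. -/
def conjRF : RatFunc ℂ →+* RatFunc ℂ :=
  RatFunc.mapRingHom (Polynomial.mapRingHom (starRingEnd ℂ))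
    (by
      intro x hx
      simp only [Submonoid.mem_comap, mem_nonZeroDivisors_iff_ne_zero] at *
      intro h
      exact hx (Polynomial.map_injective _ (starRingEnd ℂ).injective (by simpa using h)))

/-- Substitution of `g` for the variable in `f`. -/
def subst (g f : RatFunc ℂ) : RatFunc ℂ := RatFunc.eval (algebraMap ℂ (RatFunc ℂ)) g f

/-- Constant complex matrices regarded as matrices over `ℂ(z)`. -/
def toRF {n o : Type*} (A : Matrix n o ℂ) : Matrix n o (RatFunc ℂ) :=
  A.map (algebraMap ℂ (RatFunc ℂ))

/-- The para-conjugate `R^*(1/z)`. -/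
def paraConj {n : Type*} (R : Matrix n n (RatFunc ℂ)) : Matrix n n (RatFunc ℂ) :=
  fun i j => subst (RatFunc.X)⁻¹ (conjRF (R j i))

def IsParaHermitian {n : Type*} (R : Matrix n n (RatFunc ℂ)) : Prop := paraConj R = R

def IsParaSkewHermitian {n : Type*} (R : Matrix n n (RatFunc ℂ)) : Prop := paraConj R = -R

/-- The variable `z` of `ℂ(z)`. -/
def zz : RatFunc ℂ := RatFunc.X

/-- Coefficientwise-conjugate transpose of a matrix over `ℂ(z)`. -/
def conjT {a b : Type*} (R : Matrix a b (RatFunc ℂ)) : Matrix b a (RatFunc ℂ) :=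
  fun i j => conjRF (R j i)

/-- Entrywise substitution of `g` into a matrix over `ℂ(z)`. -/
def substMat {a b : Type*} (g : RatFunc ℂ) (R : Matrix a b (RatFunc ℂ)) :
    Matrix a b (RatFunc ℂ) :=
  fun i j => subst g (R i j)

/-!
If `g` is transcendental, then substituting `g` for `z` is an injective field endomorphism `φ` of
`ℂ(z)`. If moreover `conj g = g⁻¹`, that is, `g` maps the real line into the unit circle, then
`conj (f(g)) = (conj f)(g⁻¹) = φ ((conj f)(z⁻¹))` for every rational function `f`. Entrywise this
says that the conjugate transpose of `R(g)` is `φ` applied to the para-conjugate of `R`, and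
injectivity of `φ` removes `φ` from the equation. The Cayley transform is such a `g`.
-/

universe u

section Evaluation

variable {K L M : Type u} [Field K] [Field L] [Field M]

theorem map_ratFunc_eval (θ : L →+* M) (i : K →+* L) (a : L) (f : RatFunc K) :
    θ (RatFunc.eval i a f) = RatFunc.eval (θ.comp i) (θ a) f := by
  simp only [RatFunc.eval, map_div₀, hom_eval₂]

theorem ratFunc_eval_C_X (f : RatFunc K) : RatFunc.eval RatFunc.C RatFunc.X f = f := by
  simp only [RatFunc.eval, ← RatFunc.algebraMap_eq_C, ← aeval_def,
    RatFunc.aeval_X_left_eq_algebraMap, RatFunc.num_div_denom]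

theorem ratFunc_ringHom_apply_eq_eval (θ : RatFunc K →+* L) (f : RatFunc K) :
    θ f = RatFunc.eval (θ.comp RatFunc.C) (θ RatFunc.X) f := by
  rw [← map_ratFunc_eval, ratFunc_eval_C_X]

variable [Algebra K L] [Algebra K M]

theorem algHom_ratFunc_eval (θ : L →ₐ[K] M) (a : L) (f : RatFunc K) :
    θ (RatFunc.eval (algebraMap K L) a f) = RatFunc.eval (algebraMap K M) (θ a) f := by
  simpa only [AlgHom.comp_algebraMap, RingHom.coe_coe] using
    map_ratFunc_eval (θ : L →+* M) (algebraMap K L) a f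

/-- Evaluation of rational functions at a transcendental element `x`, as an algebra homomorphism.
Transcendence excludes the junk values that `RatFunc.eval` takes at poles. -/
def ratFuncEvalAlgHom {x : L} (hx : Transcendental K x) : RatFunc K →ₐ[K] L :=
  RatFunc.liftAlgHom (aeval x)
    (nonZeroDivisors_le_comap_nonZeroDivisors_of_injective _ (transcendental_iff_injective.mp hx))

theorem ratFuncEvalAlgHom_apply {x : L} (hx : Transcendental K x) (f : RatFunc K) :
    ratFuncEvalAlgHom hx f = RatFunc.eval (algebraMap K L) x f := by
  conv_lhs => rw [← RatFunc.num_div_denom f]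
  exact RatFunc.liftAlgHom_apply_div _ _ _ _

end Evaluation

theorem conjRF_C (c : ℂ) : conjRF (RatFunc.C c) = RatFunc.C (starRingEnd ℂ c) := by
  rw [← RatFunc.algebraMap_C]
  simp [conjRF, RatFunc.coe_mapRingHom_eq_coe_map, RatFunc.map_apply]

theorem conjRF_X : conjRF RatFunc.X = RatFunc.X := by
  simp [conjRF, RatFunc.coe_mapRingHom_eq_coe_map, RatFunc.map_apply]

section Substitution

variable {g : RatFunc ℂ}

theorem ratFuncEvalAlgHom_eq_subst (hg : Transcendental ℂ g) (f : RatFunc ℂ) :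
    ratFuncEvalAlgHom hg f = subst g f :=
  ratFuncEvalAlgHom_apply hg f

theorem subst_injective (hg : Transcendental ℂ g) : Function.Injective (subst g) := by
  rw [← funext (ratFuncEvalAlgHom_eq_subst hg)]
  exact (ratFuncEvalAlgHom hg).injective

theorem subst_subst (hg : Transcendental ℂ g) (h f : RatFunc ℂ) :
    subst g (subst h f) = subst (subst g h) f := by
  rw [← ratFuncEvalAlgHom_eq_subst hg, ← ratFuncEvalAlgHom_eq_subst hg, subst, subst,
    algHom_ratFunc_eval]

theorem subst_X_inv (hg : Transcendental ℂ g) : subst g RatFunc.X⁻¹ = g⁻¹ := by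
  rw [← ratFuncEvalAlgHom_eq_subst hg, map_inv₀, ratFuncEvalAlgHom_eq_subst hg, subst,
    RatFunc.eval_X]

theorem conjRF_subst (hg : Transcendental ℂ (conjRF g)) (f : RatFunc ℂ) :
    conjRF (subst g f) = subst (conjRF g) (conjRF f) := by
  let θ : RatFunc ℂ →+* RatFunc ℂ := (ratFuncEvalAlgHom hg).toRingHom.comp conjRF
  have hθ (r : RatFunc ℂ) : θ r = subst (conjRF g) (conjRF r) := ratFuncEvalAlgHom_eq_subst hg _
  have hθ_C : θ.comp RatFunc.C = conjRF.comp RatFunc.C := by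
    ext c
    rw [RingHom.comp_apply, hθ, RingHom.comp_apply, conjRF_C, subst, RatFunc.eval_C,
      RatFunc.algebraMap_eq_C]
  have hθ_X : θ RatFunc.X = conjRF g := by rw [hθ, conjRF_X, subst, RatFunc.eval_X]
  rw [← hθ, ratFunc_ringHom_apply_eq_eval θ, hθ_C, hθ_X, subst, map_ratFunc_eval,
    RatFunc.algebraMap_eq_C]

theorem substMat_injective {a b : Type*} (hg : Transcendental ℂ g) :
    Function.Injective (substMat (a := a) (b := b) g) := fun _ _ h ↦
  Matrix.ext fun i j ↦ subst_injective hg (congrFun₂ h i j)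

variable {n : Type*}

theorem conjT_substMat (hg : Transcendental ℂ g) (hconj : conjRF g = g⁻¹)
    (R : Matrix n n (RatFunc ℂ)) : conjT (substMat g R) = substMat g (paraConj R) := by
  have hconj_tr : Transcendental ℂ (conjRF g) := hconj ▸ IsAlgebraic.inv_iff.not.mpr hg
  ext i j : 2
  calc conjRF (subst g (R j i)) = subst g⁻¹ (conjRF (R j i)) := by
        rw [conjRF_subst hconj_tr, hconj]
    _ = subst g (subst RatFunc.X⁻¹ (conjRF (R j i))) := by
        rw [subst_subst hg, subst_X_inv hg]

theorem paraHermitian_iff_mobius_hermitian_general (hg : Transcendental ℂ g)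
    (hconj : conjRF g = g⁻¹) (R : Matrix n n (RatFunc ℂ)) :
    IsParaHermitian R ↔ conjT (substMat g R) = substMat g R := by
  rw [conjT_substMat hg hconj, (substMat_injective hg).eq_iff, IsParaHermitian]

end Substitution

theorem transcendental_sub_div_add {K L : Type*} [Field K] [Field L] [Algebra K L] {a : K}
    (ha : 2 * a ≠ 0) {x : L} (hx : Transcendental K x) :
    Transcendental K ((algebraMap K L a - x) / (algebraMap K L a + x)) := by
  intro hw
  set w := (algebraMap K L a - x) / (algebraMap K L a + x) with hw_def
  have ha' : 2 * algebraMap K L a ≠ 0 := by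
    simpa only [map_mul, map_ofNat] using (map_ne_zero (algebraMap K L)).mpr ha
  have hden : algebraMap K L a + x ≠ 0 := fun h ↦
    hx (eq_neg_of_add_eq_zero_right h ▸ (isAlgebraic_algebraMap a).neg)
  have hw_add : 1 + w = 2 * algebraMap K L a / (algebraMap K L a + x) := by
    rw [hw_def]; field_simp; ring
  -- The Cayley transform is inverted by `w ↦ a * (1 - w) / (1 + w)`.
  have hx_eq : x = algebraMap K L a * (1 - w) * (1 + w)⁻¹ := by
    rw [eq_mul_inv_iff_mul_eq₀ (hw_add ▸ div_ne_zero ha' hden), hw_def]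
    field_simp
    ring
  exact hx (hx_eq ▸ ((isAlgebraic_algebraMap a).mul (isAlgebraic_one.sub hw)).mul
    (isAlgebraic_one.add hw).inv)

/-- The Cayley transform `(i - z) / (i + z)`, which maps the real line into the unit circle. -/
def cayley : RatFunc ℂ := (RatFunc.C Complex.I - zz) / (RatFunc.C Complex.I + zz)

theorem transcendental_cayley : Transcendental ℂ cayley :=
  transcendental_sub_div_add (mul_ne_zero two_ne_zero Complex.I_ne_zero) RatFunc.transcendental_X

theorem conjRF_cayley : conjRF cayley = cayley⁻¹ := by
  rw [cayley, zz, inv_div, map_div₀, map_sub, map_add, conjRF_C, conjRF_X, Complex.conj_I, map_neg,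
    ← neg_div_neg_eq]
  ring

/-- `R` is para-Hermitian iff `G(x) := R((i-x)/(i+x))` is Hermitian. -/
theorem paraHermitian_iff_mobius_hermitian (m : ℕ)
    (R G : Matrix (Fin m) (Fin m) (RatFunc ℂ))
    (hG : G = substMat ((RatFunc.C Complex.I - zz) / (RatFunc.C Complex.I + zz)) R) :
    IsParaHermitian R ↔ conjT G = G := by
  rw [hG]
  exact paraHermitian_iff_mobius_hermitian_general transcendental_cayley conjRF_cayley R
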